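/- Let v₁, …, vₙ ∈ ℂⁿ and let A be the n × n complex matrix with columns v₁, …, vₙ. Let G be the real n × n matrix with entries G j k = Re ⟪v_j, v_k⟫, where ⟪·,·⟫ is the standard Hermitian inner product on ℂⁿ. Then ‖det A‖² ≤ det G. Moreover, if all the vectors v_j have real coordinates, then equality holds. -/

import Mathlib

/-!
Since `1 + t ≤ exp t` on eigenvalues, `log det` lies below its tangent planes on positive definite
matrices, and is therefore concave there (Ky Fan). If `H` is a positive definite Hermitian matrix,
then so is `Hᵀ`, it has the same determinant, and the midpoint of `H` and `Hᵀ` is the entrywise real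
part of `H`; hence `det H ≤ det (Re H)`, which is clear when `H` is only semidefinite and singular.
Take `H = Aᴴ * A`, whose determinant is `‖det A‖ ^ 2` and whose real part is the real Gram matrix of
the columns of `A`.
-/

section LogConcavity

open RCLike
open scoped Matrix ComplexOrder MatrixOrder

variable {ι 𝕜 : Type*} [Fintype ι] [DecidableEq ι] [RCLike 𝕜] {X Y P : Matrix ι ι 𝕜}

theorem re_det_le_exp_re_trace_sub_card_of_posSemidef (hX : X.PosSemidef) :
    re X.det ≤ Real.exp (re X.trace - Fintype.card ι) := by
  calc re X.det = ∏ i, hX.1.eigenvalues i := by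
        rw [hX.1.det_eq_prod_eigenvalues, ← ofReal_prod, ofReal_re]
    _ ≤ ∏ i, Real.exp (hX.1.eigenvalues i - 1) :=
        Finset.prod_le_prod (fun i _ ↦ hX.eigenvalues_nonneg i) fun i _ ↦ by
          simpa using Real.add_one_le_exp (hX.1.eigenvalues i - 1)
    _ = Real.exp (∑ i, hX.1.eigenvalues i - Fintype.card ι) := by
        simp [← Real.exp_sum]
    _ = Real.exp (re X.trace - Fintype.card ι) := by
        rw [hX.1.trace_eq_sum_eigenvalues, ← ofReal_sum, ofReal_re]

-- The exponent is the derivative of `log det` at `P` in the direction `X - P`.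
theorem re_det_le_re_det_mul_exp_of_posDef (hX : X.PosSemidef) (hP : P.PosDef) :
    re X.det ≤ re P.det * Real.exp (re (P⁻¹ * X).trace - Fintype.card ι) := by
  obtain ⟨B, hB, rfl⟩ : ∃ B, IsUnit B ∧ P = Bᴴ * B :=
    CStarAlgebra.isStrictlyPositive_iff_eq_star_mul_self.mp hP.isStrictlyPositive
  set M := (B⁻¹)ᴴ * X * B⁻¹ with hM
  have hdet : X.det = (Bᴴ * B).det * M.det := by
    have hB_ne : B.det ≠ 0 := (B.isUnit_iff_isUnit_det.mp hB).ne_zero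
    have hB_star_ne : star B.det ≠ 0 := star_ne_zero.mpr hB_ne
    simp only [hM, Matrix.det_mul, Matrix.det_conjTranspose, Matrix.det_nonsing_inv,
      Ring.inverse_eq_inv', star_inv₀]
    field_simp
  have htrace : M.trace = ((Bᴴ * B)⁻¹ * X).trace := by
    rw [hM, Matrix.trace_mul_comm, Matrix.mul_inv_rev, Matrix.conjTranspose_nonsing_inv,
      Matrix.mul_assoc]
  have hM_psd : M.PosSemidef := hX.conjTranspose_mul_mul_same B⁻¹
  obtain ⟨hP_pos, hP_im⟩ := RCLike.pos_iff.mp hP.det_pos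
  calc re X.det = re (Bᴴ * B).det * re M.det := by
        rw [hdet, mul_re, hP_im, zero_mul, sub_zero]
    _ ≤ _ := by
        rw [← htrace]
        gcongr
        exact re_det_le_exp_re_trace_sub_card_of_posSemidef hM_psd

theorem re_det_rpow_mul_re_det_rpow_le (hX : X.PosDef) (hY : Y.PosDef) {a b : ℝ}
    (ha : 0 ≤ a) (hb : 0 ≤ b) (hab : a + b = 1) :
    re X.det ^ a * re Y.det ^ b ≤ re (a • X + b • Y).det := by
  obtain rfl | ha_pos := ha.eq_or_lt
  · obtain rfl : b = 1 := by linarith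
    simp
  set P := a • X + b • Y with hP_def
  have hP : P.PosDef := (hX.smul ha_pos).add_posSemidef (hY.posSemidef.smul hb)
  have hX_det : 0 ≤ re X.det := (RCLike.pos_iff.mp hX.det_pos).1.le
  have hY_det : 0 ≤ re Y.det := (RCLike.pos_iff.mp hY.det_pos).1.le
  have hP_det : 0 < re P.det := (RCLike.pos_iff.mp hP.det_pos).1
  set s := re (P⁻¹ * X).trace - Fintype.card ι
  set t := re (P⁻¹ * Y).trace - Fintype.card ι
  have hst : s * a + t * b = 0 := by
    have htrace : a * re (P⁻¹ * X).trace + b * re (P⁻¹ * Y).trace = Fintype.card ι := by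
      rw [← smul_re, ← smul_re, ← map_add, ← Matrix.trace_smul, ← Matrix.trace_smul,
        ← Matrix.trace_add, ← Matrix.mul_smul, ← Matrix.mul_smul, ← Matrix.mul_add, ← hP_def,
        P.nonsing_inv_mul (P.isUnit_iff_isUnit_det.mp hP.isUnit), Matrix.trace_one, natCast_re]
    linear_combination htrace - Fintype.card ι * hab
  calc re X.det ^ a * re Y.det ^ b
      ≤ (re P.det * Real.exp s) ^ a * (re P.det * Real.exp t) ^ b := by
        gcongr
        · exact re_det_le_re_det_mul_exp_of_posDef hX.posSemidef hP
        · exact re_det_le_re_det_mul_exp_of_posDef hY.posSemidef hP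
    _ = re P.det ^ (a + b) * Real.exp (s * a + t * b) := by
        rw [Real.mul_rpow hP_det.le (Real.exp_pos s).le,
          Real.mul_rpow hP_det.le (Real.exp_pos t).le, ← Real.exp_mul, ← Real.exp_mul,
          Real.rpow_add hP_det, Real.exp_add]
        ring
    _ = re P.det := by rw [hab, hst, Real.rpow_one, Real.exp_zero, mul_one]

end LogConcavity

section RealPart

open RCLike
open scoped Matrix ComplexOrder

variable {ι 𝕜 : Type*} [RCLike 𝕜] {H : Matrix ι ι 𝕜}

theorem map_ofReal_map_re_eq_midpoint (hH : H.IsHermitian) :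
    (H.map re).map (ofReal : ℝ → 𝕜) = (2⁻¹ : ℝ) • H + (2⁻¹ : ℝ) • Hᵀ := by
  ext i j
  have hji : H j i = star (H i j) := (hH.apply j i).symm
  simp only [Matrix.map_apply, re_eq_add_conj, Matrix.add_apply, Matrix.smul_apply,
    real_smul_eq_coe_mul, map_inv₀, map_ofNat, Matrix.transpose_apply, hji, star_def]
  ring

variable [Fintype ι] [DecidableEq ι]

theorem re_det_map_ofReal (G : Matrix ι ι ℝ) : re (G.map (ofReal : ℝ → 𝕜)).det = G.det := by
  rw [← ofReal_re (K := 𝕜) G.det]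
  exact congrArg re ((algebraMap ℝ 𝕜).map_det G).symm

theorem re_det_le_det_map_re_of_posSemidef (hH : H.PosSemidef) : re H.det ≤ (H.map re).det := by
  rw [← re_det_map_ofReal (𝕜 := 𝕜), map_ofReal_map_re_eq_midpoint hH.isHermitian]
  by_cases hdet : H.det = 0
  · have hmid : ((2⁻¹ : ℝ) • H + (2⁻¹ : ℝ) • Hᵀ).PosSemidef :=
      (hH.smul (by norm_num)).add (hH.transpose.smul (by norm_num))
    simpa [hdet] using (RCLike.nonneg_iff.mp hmid.det_nonneg).1
  · have hH_pos : H.PosDef := hH.posDef_iff_det_ne_zero.mpr hdet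
    have hH_det : 0 < re H.det := (RCLike.pos_iff.mp hH_pos.det_pos).1
    calc re H.det = re H.det ^ (2⁻¹ : ℝ) * re Hᵀ.det ^ (2⁻¹ : ℝ) := by
          rw [H.det_transpose, ← Real.rpow_add hH_det]
          norm_num
      _ ≤ re ((2⁻¹ : ℝ) • H + (2⁻¹ : ℝ) • Hᵀ).det :=
          re_det_rpow_mul_re_det_rpow_le hH_pos hH_pos.transpose (by norm_num) (by norm_num)
            (by norm_num)

theorem re_det_eq_det_map_re_of_im_eq_zero (hH : ∀ i j, im (H i j) = 0) :
    re H.det = (H.map re).det := by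
  have hH_real : (H.map re).map (ofReal : ℝ → 𝕜) = H := by
    ext i j
    exact RCLike.ext (by simp) (by simp [hH i j])
  rw [← re_det_map_ofReal (𝕜 := 𝕜), hH_real]

theorem norm_det_sq_eq_re_det_conjTranspose_mul_self (A : Matrix ι ι 𝕜) :
    ‖A.det‖ ^ 2 = re (Aᴴ * A).det := by
  rw [Matrix.det_mul, Matrix.det_conjTranspose, star_def, RCLike.conj_mul, ← ofReal_pow, ofReal_re]

-- The imaginary part of `Aᴴ * A` is the matrix of the symplectic form on the columns of `A`, so the
-- equality clause concerns columns spanning an isotropic subspace.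
theorem normSq_det_le_det_realGram_general (A : Matrix ι ι 𝕜) :
    ‖A.det‖ ^ 2 ≤ ((Aᴴ * A).map re).det ∧
      ((∀ j k, im ((Aᴴ * A) j k) = 0) → ‖A.det‖ ^ 2 = ((Aᴴ * A).map re).det) := by
  rw [norm_det_sq_eq_re_det_conjTranspose_mul_self]
  exact ⟨re_det_le_det_map_re_of_posSemidef (Matrix.posSemidef_conjTranspose_mul_self A),
    re_det_eq_det_map_re_of_im_eq_zero⟩

end RealPart

/-- Hadamard-type comass inequality: for vectors `v₁, …, vₙ ∈ ℂⁿ` with column matrix `A`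
and real Gram matrix `G j k = Re ⟪v_j, v_k⟫`, one has `‖det A‖² ≤ det G`, with equality
when all the vectors have real coordinates. -/
theorem normSq_det_le_det_realGram {n : ℕ} (v : Fin n → (Fin n → ℂ))
    (A : Matrix (Fin n) (Fin n) ℂ) (hA : ∀ i j, A i j = v j i)
    (G : Matrix (Fin n) (Fin n) ℝ)
    (hG : ∀ j k, G j k = (∑ i, (starRingEnd ℂ) (v j i) * v k i).re) :
    ‖A.det‖ ^ 2 ≤ G.det ∧
    ((∀ j i, (v j i).im = 0) → ‖A.det‖ ^ 2 = G.det) := by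
  have hG_eq : G = (A.conjTranspose * A).map RCLike.re := by
    ext j k
    simp [hG, Matrix.mul_apply, hA]
  obtain ⟨hle, heq⟩ := normSq_det_le_det_realGram_general A
  rw [← hG_eq] at hle heq
  exact ⟨hle, fun hv ↦ heq fun j k ↦ by simp [Matrix.mul_apply, hA, hv]⟩
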